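/- The odd operators on W are nilpotent of order two: E23 ∘ E23 = 0 and E32 ∘ E32 = 0 as linear operators on W (the Serre relations E23² = E32² = 0 of U_q[gl(2/1)]). -/

import Mathlib

noncomputable section

/-- The `q`-number `[x] = (q^x - q^(-x))/(q - q⁻¹)`. -/
def qn (q : ℝ) (x : ℤ) : ℝ := (q ^ x - q ^ (-x)) / (q - q⁻¹)

/-- The triple `(m12, m22, m32)` attached to the sector `k ∈ {0,1,2,3}`. -/
def trip (m13 m23 m33 : ℤ) : Fin 4 → ℤ × ℤ × ℤ
  | 0 => (m13, m23, m33)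
  | 1 => (m13, m23 - 1, m33 + 1)
  | 2 => (m13 - 1, m23, m33 + 1)
  | 3 => (m13 - 1, m23 - 1, m33 + 2)

def M12 (m13 m23 m33 : ℤ) (k : Fin 4) : ℤ := (trip m13 m23 m33 k).1
def M22 (m13 m23 m33 : ℤ) (k : Fin 4) : ℤ := (trip m13 m23 m33 k).2.1
def M32 (m13 m23 m33 : ℤ) (k : Fin 4) : ℤ := (trip m13 m23 m33 k).2.2

/-- `m11` is in the allowed range `m22 ≤ m11 ≤ m12` of the sector `k`. -/
def InR (m13 m23 m33 : ℤ) (k : Fin 4) (x : ℤ) : Prop :=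
  M22 m13 m23 m33 k ≤ x ∧ x ≤ M12 m13 m23 m33 k

instance (m13 m23 m33 : ℤ) (k : Fin 4) (x : ℤ) : Decidable (InR m13 m23 m33 k x) :=
  instDecidableAnd

/-- The index set of the basis `v(k, m11)` of `W`. -/
abbrev Idx (m13 m23 m33 : ℤ) : Type :=
  {p : Fin 4 × ℤ // InR m13 m23 m33 p.1 p.2}

/-- The module `W = W^q([m13,m23,m33])`, realized as the free complex vector
space on the basis `v(k, m11)`, `k ∈ {0,1,2,3}`, `m22 ≤ m11 ≤ m12`. -/
abbrev Wsp (m13 m23 m33 : ℤ) : Type := Idx m13 m23 m33 →₀ ℂ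

/-- The basis vector `v(k, m11)` (zero if `m11` is out of range). -/
def bv (m13 m23 m33 : ℤ) (k : Fin 4) (x : ℤ) : Wsp m13 m23 m33 :=
  if h : InR m13 m23 m33 k x then Finsupp.single ⟨(k, x), h⟩ 1 else 0

/-- The sector `V_k`, the span of the `v(k, ·)`. -/
def Vk (m13 m23 m33 : ℤ) (k : Fin 4) : Submodule ℂ (Wsp m13 m23 m33) :=
  Submodule.span ℂ (Set.range (bv m13 m23 m33 k))

/-- The Gel'fand--Zetlin realization of the induced `U_q[gl(2/1)]`-module
`W^q([m13,m23,m33])`: seven linear operators acting on the basis `v(k, m11)`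
by the stated formulas (terms with `m11` out of range being `0`). -/
structure GZ (q : ℝ) (m13 m23 m33 : ℤ) where
  E11 : Wsp m13 m23 m33 →ₗ[ℂ] Wsp m13 m23 m33
  E22 : Wsp m13 m23 m33 →ₗ[ℂ] Wsp m13 m23 m33
  E33 : Wsp m13 m23 m33 →ₗ[ℂ] Wsp m13 m23 m33
  E12 : Wsp m13 m23 m33 →ₗ[ℂ] Wsp m13 m23 m33
  E21 : Wsp m13 m23 m33 →ₗ[ℂ] Wsp m13 m23 m33
  E23 : Wsp m13 m23 m33 →ₗ[ℂ] Wsp m13 m23 m33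
  E32 : Wsp m13 m23 m33 →ₗ[ℂ] Wsp m13 m23 m33
  hE11 : ∀ (k : Fin 4) (x : ℤ), InR m13 m23 m33 k x →
    E11 (bv m13 m23 m33 k x) = (x : ℂ) • bv m13 m23 m33 k x
  hE22 : ∀ (k : Fin 4) (x : ℤ), InR m13 m23 m33 k x →
    E22 (bv m13 m23 m33 k x) =
      ((M12 m13 m23 m33 k + M22 m13 m23 m33 k - x : ℤ) : ℂ) • bv m13 m23 m33 k x
  hE33 : ∀ (k : Fin 4) (x : ℤ), InR m13 m23 m33 k x →
    E33 (bv m13 m23 m33 k x) = ((M32 m13 m23 m33 k : ℤ) : ℂ) • bv m13 m23 m33 k x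
  hE12 : ∀ (k : Fin 4) (x : ℤ), InR m13 m23 m33 k x →
    E12 (bv m13 m23 m33 k x) =
      ((Real.sqrt (qn q (M12 m13 m23 m33 k - x) * qn q (x - M22 m13 m23 m33 k + 1)) : ℝ) : ℂ) •
        bv m13 m23 m33 k (x + 1)
  hE21 : ∀ (k : Fin 4) (x : ℤ), InR m13 m23 m33 k x →
    E21 (bv m13 m23 m33 k x) =
      ((Real.sqrt (qn q (M12 m13 m23 m33 k - x + 1) * qn q (x - M22 m13 m23 m33 k)) : ℝ) : ℂ) •
        bv m13 m23 m33 k (x - 1)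
  hE23₀ : ∀ x : ℤ, InR m13 m23 m33 0 x → E23 (bv m13 m23 m33 0 x) = 0
  hE23₁ : ∀ x : ℤ, InR m13 m23 m33 1 x →
    E23 (bv m13 m23 m33 1 x) =
      ((Real.sqrt (qn q (x - m23 + 1) / qn q (m13 - m23 + 1)) * qn q (m23 + m33) : ℝ) : ℂ) •
        bv m13 m23 m33 0 x
  hE23₂ : ∀ x : ℤ, InR m13 m23 m33 2 x →
    E23 (bv m13 m23 m33 2 x) =
      ((Real.sqrt (qn q (m13 - x) / qn q (m13 - m23)) * qn q (m13 + m33 + 1) : ℝ) : ℂ) •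
        bv m13 m23 m33 0 x
  hE23₃ : ∀ x : ℤ, InR m13 m23 m33 3 x →
    E23 (bv m13 m23 m33 3 x) =
      ((q⁻¹ * Real.sqrt (qn q (m13 - x) / qn q (m13 - m23 + 1)) * qn q (m13 + m33 + 1) : ℝ) : ℂ) •
          bv m13 m23 m33 1 x
        - ((q⁻¹ * Real.sqrt (qn q (x - m23 + 1) * qn q (m13 - m23)) *
            (qn q (m23 + m33) / qn q (m13 - m23 + 1)) : ℝ) : ℂ) • bv m13 m23 m33 2 x
  hE32₀ : ∀ x : ℤ, InR m13 m23 m33 0 x →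
    E32 (bv m13 m23 m33 0 x) =
      ((Real.sqrt (qn q (x - m23 + 1) / qn q (m13 - m23 + 1)) : ℝ) : ℂ) • bv m13 m23 m33 1 x
        + ((Real.sqrt (qn q (m13 - x) * qn q (m13 - m23)) / qn q (m13 - m23 + 1) : ℝ) : ℂ) •
            bv m13 m23 m33 2 x
  hE32₁ : ∀ x : ℤ, InR m13 m23 m33 1 x →
    E32 (bv m13 m23 m33 1 x) =
      ((q * Real.sqrt (qn q (m13 - x) / qn q (m13 - m23 + 1)) : ℝ) : ℂ) • bv m13 m23 m33 3 x
  hE32₂ : ∀ x : ℤ, InR m13 m23 m33 2 x →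
    E32 (bv m13 m23 m33 2 x) =
      -(((q * Real.sqrt (qn q (x - m23 + 1) / qn q (m13 - m23)) : ℝ) : ℂ) • bv m13 m23 m33 3 x)
  hE32₃ : ∀ x : ℤ, InR m13 m23 m33 3 x → E32 (bv m13 m23 m33 3 x) = 0

/-! Each odd operator moves the sectors along `3 → {1, 2} → 0` (for `E23`) or `0 → {1, 2} → 3`
(for `E32`) and preserves `m11`, so its square can be nonzero only on `v(3, x)`, respectively
`v(0, x)`, where it is a sum over the two paths through the sectors `1` and `2`. The range of
sector `2` is the intersection of those of the sectors `0` and `3`. Where both outer vectors exist,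
so do both paths, and their coefficients are opposite because, up to a common factor, both have
absolute value `√a * √b / c` with `a = [m13 - x]`, `b = [x - m23 + 1]`, `c = [m13 - m23 + 1]`.
Otherwise the target vector is zero, and so is `v(2, x)`. -/

section

variable {q : ℝ} {m13 m23 m33 x : ℤ} {k : Fin 4}

lemma qn_pos (hq : 0 < q) (hq1 : q ≠ 1) (hx : 0 < x) : 0 < qn q x := by
  have hneg : -x < x := by lia
  rcases lt_or_gt_of_ne hq1 with hlt | hgt
  · exact div_pos_of_neg_of_neg (sub_neg.2 (zpow_lt_zpow_right_of_lt_one₀ hq hlt hneg))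
      (sub_neg.2 (hlt.trans ((one_lt_inv₀ hq).2 hlt)))
  · exact div_pos (sub_pos.2 (zpow_lt_zpow_right₀ hgt hneg))
      (sub_pos.2 ((inv_lt_one_of_one_lt₀ hgt).trans hgt))

lemma sqrt_div_mul_sqrt_div_eq (a b : ℝ) {c d : ℝ} (hc : 0 ≤ c) (hd : 0 < d) :
    √(a / c) * √(b / c) = √(b * d) / c * √(a / d) := by
  have hd' : √d ≠ 0 := (Real.sqrt_pos.2 hd).ne'
  calc √(a / c) * √(b / c) = √a * √b / c := by
        rw [Real.sqrt_div' a hc, Real.sqrt_div' b hc, div_mul_div_comm, Real.mul_self_sqrt hc]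
    _ = √(b * d) / c * √(a / d) := by
        rw [Real.sqrt_mul' b hd.le, Real.sqrt_div' a hd.le]
        field_simp

lemma sqrt_div_qn_mul_sqrt_div_qn_eq {n : ℤ} (hq : 0 < q) (hq1 : q ≠ 1) (hn : 0 < n) (a b : ℝ) :
    √(a / qn q (n + 1)) * √(b / qn q (n + 1)) =
      √(b * qn q n) / qn q (n + 1) * √(a / qn q n) :=
  sqrt_div_mul_sqrt_div_eq a b (qn_pos hq hq1 (by lia)).le (qn_pos hq hq1 hn)

lemma inR_one_of_inR_zero (h : InR m13 m23 m33 0 x) : InR m13 m23 m33 1 x := by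
  simp only [InR, M12, M22, trip] at h ⊢
  lia

lemma inR_one_of_inR_three (h : InR m13 m23 m33 3 x) : InR m13 m23 m33 1 x := by
  simp only [InR, M12, M22, trip] at h ⊢
  lia

lemma inR_two_iff : InR m13 m23 m33 2 x ↔ InR m13 m23 m33 0 x ∧ InR m13 m23 m33 3 x := by
  simp only [InR, M12, M22, trip]
  lia

lemma lt_of_inR_two (h : InR m13 m23 m33 2 x) : m23 < m13 := by
  simp only [InR, M12, M22, trip] at h
  lia

lemma bv_of_inR (h : InR m13 m23 m33 k x) :
    bv m13 m23 m33 k x = Finsupp.single ⟨(k, x), h⟩ 1 := dif_pos h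

lemma bv_of_not_inR (h : ¬ InR m13 m23 m33 k x) : bv m13 m23 m33 k x = 0 := dif_neg h

lemma linearMap_ext_bv {M : Type*} [AddCommMonoid M] [Module ℂ M]
    {f g : Wsp m13 m23 m33 →ₗ[ℂ] M}
    (h : ∀ k x, InR m13 m23 m33 k x → f (bv m13 m23 m33 k x) = g (bv m13 m23 m33 k x)) :
    f = g := by
  refine Finsupp.lhom_ext' fun ⟨⟨k, x⟩, hx⟩ ↦ LinearMap.ext_ring ?_
  simpa only [bv_of_inR hx, LinearMap.comp_apply, Finsupp.lsingle_apply] using h k x hx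

namespace GZ

lemma E23_bv_zero (R : GZ q m13 m23 m33) (x : ℤ) : R.E23 (bv m13 m23 m33 0 x) = 0 := by
  by_cases h : InR m13 m23 m33 0 x
  · exact R.hE23₀ x h
  · rw [bv_of_not_inR h, map_zero]

lemma E32_bv_three (R : GZ q m13 m23 m33) (x : ℤ) : R.E32 (bv m13 m23 m33 3 x) = 0 := by
  by_cases h : InR m13 m23 m33 3 x
  · exact R.hE32₃ x h
  · rw [bv_of_not_inR h, map_zero]

lemma E23_E23_bv_three (hq : 0 < q) (hq1 : q ≠ 1) (R : GZ q m13 m23 m33)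
    (h3 : InR m13 m23 m33 3 x) : R.E23 (R.E23 (bv m13 m23 m33 3 x)) = 0 := by
  rw [R.hE23₃ x h3, map_sub, map_smul, map_smul, R.hE23₁ x (inR_one_of_inR_three h3)]
  by_cases h0 : InR m13 m23 m33 0 x
  · have h2 : InR m13 m23 m33 2 x := inR_two_iff.2 ⟨h0, h3⟩
    rw [R.hE23₂ x h2, sub_eq_zero, smul_smul, smul_smul, ← Complex.ofReal_mul,
      ← Complex.ofReal_mul]
    have hpaths := sqrt_div_qn_mul_sqrt_div_qn_eq hq hq1 (sub_pos.2 (lt_of_inR_two h2))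
      (qn q (m13 - x)) (qn q (x - m23 + 1))
    congr 2
    linear_combination q⁻¹ * qn q (m13 + m33 + 1) * qn q (m23 + m33) * hpaths
  · have h2 : ¬ InR m13 m23 m33 2 x := fun h ↦ h0 (inR_two_iff.1 h).1
    simp only [bv_of_not_inR h0, bv_of_not_inR h2, map_zero, smul_zero, sub_zero]

lemma E32_E32_bv_zero (hq : 0 < q) (hq1 : q ≠ 1) (R : GZ q m13 m23 m33)
    (h0 : InR m13 m23 m33 0 x) : R.E32 (R.E32 (bv m13 m23 m33 0 x)) = 0 := by
  rw [R.hE32₀ x h0, map_add, map_smul, map_smul, R.hE32₁ x (inR_one_of_inR_zero h0)]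
  by_cases h3 : InR m13 m23 m33 3 x
  · have h2 : InR m13 m23 m33 2 x := inR_two_iff.2 ⟨h0, h3⟩
    rw [R.hE32₂ x h2, smul_neg, add_neg_eq_zero, smul_smul, smul_smul, ← Complex.ofReal_mul,
      ← Complex.ofReal_mul]
    have hpaths := sqrt_div_qn_mul_sqrt_div_qn_eq hq hq1 (sub_pos.2 (lt_of_inR_two h2))
      (qn q (x - m23 + 1)) (qn q (m13 - x))
    congr 2
    linear_combination q * hpaths
  · have h2 : ¬ InR m13 m23 m33 2 x := fun h ↦ h3 (inR_two_iff.1 h).2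
    simp only [bv_of_not_inR h3, bv_of_not_inR h2, map_zero, smul_zero, add_zero]

theorem E23_comp_E23 (hq : 0 < q) (hq1 : q ≠ 1) (R : GZ q m13 m23 m33) :
    R.E23 ∘ₗ R.E23 = 0 := by
  refine linearMap_ext_bv fun k x hx ↦ ?_
  rw [LinearMap.comp_apply, LinearMap.zero_apply]
  match k, hx with
  | 0, h0 => rw [R.hE23₀ x h0, map_zero]
  | 1, h1 => rw [R.hE23₁ x h1, map_smul, R.E23_bv_zero, smul_zero]
  | 2, h2 => rw [R.hE23₂ x h2, map_smul, R.E23_bv_zero, smul_zero]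
  | 3, h3 => exact R.E23_E23_bv_three hq hq1 h3

theorem E32_comp_E32 (hq : 0 < q) (hq1 : q ≠ 1) (R : GZ q m13 m23 m33) :
    R.E32 ∘ₗ R.E32 = 0 := by
  refine linearMap_ext_bv fun k x hx ↦ ?_
  rw [LinearMap.comp_apply, LinearMap.zero_apply]
  match k, hx with
  | 0, h0 => exact R.E32_E32_bv_zero hq hq1 h0
  | 1, h1 => rw [R.hE32₁ x h1, map_smul, R.E32_bv_three, smul_zero]
  | 2, h2 => rw [R.hE32₂ x h2, map_neg, map_smul, R.E32_bv_three, smul_zero, neg_zero]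
  | 3, h3 => rw [R.hE32₃ x h3, map_zero]

end GZ

end

/-- The odd operators on `W` are nilpotent of order two:
`E23 ∘ E23 = 0` and `E32 ∘ E32 = 0` (the Serre relations `E23² = E32² = 0`
of `U_q[gl(2/1)]`). -/
theorem stmt_7 (q : ℝ) (hq : 0 < q) (hq1 : q ≠ 1)
    (m13 m23 m33 : ℤ) (hm : m23 ≤ m13) (R : GZ q m13 m23 m33) :
    R.E23 ∘ₗ R.E23 = 0 ∧ R.E32 ∘ₗ R.E32 = 0 :=
  ⟨R.E23_comp_E23 hq hq1, R.E32_comp_E32 hq hq1⟩
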